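/- Let K ≥ 1 and n ≥ 1 be integers, let μ > 0 be a real number, and let φ : ℝ → ℝ satisfy φ(x) ≤ 𝟙{x > 0} for every real x (where 𝟙{x > 0} equals 1 if x > 0 and 0 otherwise). For each i ∈ {1,…,n} let z⁽ⁱ⁾ ∈ ℝ^K be a vector of scores and y_i ∈ {1,…,K} a label, and set F⁽ⁱ⁾_j = z⁽ⁱ⁾_j − z⁽ⁱ⁾_{y_i} for each j ∈ {1,…,K}. Then (1/n) ∑_{i=1}^n 𝟙{ max_{j∈{1,…,K}} F⁽ⁱ⁾_j > 0 } ≥ (1/n) ∑_{i=1}^n (1/μ) log( ∑_{j=1}^K exp(μ φ(F⁽ⁱ⁾_j)) ) − (1/μ) log K. -/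

import Mathlib

open Finset

section LogSumExp

variable {κ : Type*} {s : Finset κ} {f : κ → ℝ} {c : ℝ}

lemma log_card_mul_exp (hs : s.Nonempty) (c : ℝ) :
    Real.log (#s * Real.exp c) = Real.log #s + c := by
  rw [Real.log_mul (Nat.cast_ne_zero.mpr hs.card_ne_zero) (Real.exp_ne_zero c), Real.log_exp]

lemma log_sum_exp_le_log_card_add (hs : s.Nonempty) (h : ∀ j ∈ s, f j ≤ c) :
    Real.log (∑ j ∈ s, Real.exp (f j)) ≤ Real.log #s + c := by
  have sum_le : ∑ j ∈ s, Real.exp (f j) ≤ #s * Real.exp c := by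
    simpa only [nsmul_eq_mul] using
      sum_le_card_nsmul s _ _ fun j hj ↦ Real.exp_le_exp.mpr (h j hj)
  have sum_exp_pos : 0 < ∑ j ∈ s, Real.exp (f j) :=
    sum_pos (fun j _ ↦ Real.exp_pos (f j)) hs
  exact (Real.log_le_log sum_exp_pos sum_le).trans_eq (log_card_mul_exp hs c)

lemma log_card_add_le_log_sum_exp (hs : s.Nonempty) (h : ∀ j ∈ s, c ≤ f j) :
    Real.log #s + c ≤ Real.log (∑ j ∈ s, Real.exp (f j)) := by
  have le_sum : #s * Real.exp c ≤ ∑ j ∈ s, Real.exp (f j) := by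
    simpa only [nsmul_eq_mul] using
      card_nsmul_le_sum s _ _ fun j hj ↦ Real.exp_le_exp.mpr (h j hj)
  have card_mul_exp_pos : 0 < #s * Real.exp c :=
    mul_pos (Nat.cast_pos.mpr hs.card_pos) (Real.exp_pos c)
  exact (log_card_mul_exp hs c).symm.trans_le (Real.log_le_log card_mul_exp_pos le_sum)

-- The left-hand side is the quasi-arithmetic mean of `f` with generator `x ↦ exp (μ * x)`; like
-- every mean it is at most the largest value of `f`, whatever the sign of `μ`.
lemma one_div_mul_log_sum_exp_sub_le {μ : ℝ} (hμ : μ ≠ 0) (hs : s.Nonempty)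
    (h : ∀ j ∈ s, f j ≤ c) :
    1 / μ * Real.log (∑ j ∈ s, Real.exp (μ * f j)) - 1 / μ * Real.log #s ≤ c := by
  rw [← mul_sub, one_div_mul_eq_div]
  rcases hμ.lt_or_gt with μ_neg | μ_pos
  · have lower := log_card_add_le_log_sum_exp hs fun j hj ↦
      mul_le_mul_of_nonpos_left (h j hj) μ_neg.le
    rw [div_le_iff_of_neg' μ_neg]
    linarith
  · have upper := log_sum_exp_le_log_card_add hs fun j hj ↦
      mul_le_mul_of_nonneg_left (h j hj) μ_pos.le
    rw [div_le_iff₀' μ_pos]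
    linarith

end LogSumExp

lemma one_div_card_mul_sum_sub_le {ι : Type*} {s : Finset ι} (hs : s.Nonempty) {f g : ι → ℝ}
    {c : ℝ} (h : ∀ i ∈ s, f i - c ≤ g i) :
    1 / (#s : ℝ) * ∑ i ∈ s, f i - c ≤ 1 / (#s : ℝ) * ∑ i ∈ s, g i := by
  have card_ne_zero : (#s : ℝ) ≠ 0 := Nat.cast_ne_zero.mpr hs.card_ne_zero
  calc 1 / (#s : ℝ) * ∑ i ∈ s, f i - c = 1 / (#s : ℝ) * ∑ i ∈ s, (f i - c) := by
        rw [sum_sub_distrib, sum_const, nsmul_eq_mul]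
        field_simp
    _ ≤ 1 / (#s : ℝ) * ∑ i ∈ s, g i := by gcongr with i hi; exact h i hi

lemma monotone_ite_pos_one_zero {α : Type*} [Preorder α] [Zero α] [DecidableLT α] :
    Monotone fun x : α ↦ if 0 < x then (1 : ℝ) else 0 := by
  intro x x' hx
  by_cases x_pos : 0 < x
  · simp only [x_pos, x_pos.trans_le hx, if_true, le_refl]
  · simp only [x_pos, if_false]
    positivity

theorem empirical_zero_one_loss_ge_logsumexp_lower_bound_general
    {ι κ α : Type*} [Fintype ι] [Nonempty ι] [Fintype κ] [Nonempty κ] [LinearOrder α] [Zero α]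
    {μ : ℝ} (hμ : μ ≠ 0) {φ : α → ℝ} (hφ : ∀ x, φ x ≤ if 0 < x then (1 : ℝ) else 0)
    (F : ι → κ → α) :
    1 / (Fintype.card ι : ℝ) * ∑ i, (if 0 < univ.sup' univ_nonempty (F i) then (1 : ℝ) else 0) ≥
      1 / (Fintype.card ι : ℝ) * ∑ i, 1 / μ * Real.log (∑ j, Real.exp (μ * φ (F i j))) -
        1 / μ * Real.log (Fintype.card κ) := by
  refine one_div_card_mul_sum_sub_le univ_nonempty fun i _ ↦
    one_div_mul_log_sum_exp_sub_le hμ univ_nonempty fun j hj ↦ ?_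
  calc φ (F i j) ≤ if 0 < F i j then 1 else 0 := hφ (F i j)
    _ ≤ if 0 < univ.sup' univ_nonempty (F i) then 1 else 0 :=
      monotone_ite_pos_one_zero (le_sup' (F i) hj)

/-- Lemma 3.1 of the paper: if `φ` is a pointwise lower bound of the 0-1 step
function `𝟙{x > 0}`, then the empirical 0-1 loss
`(1/n) ∑ᵢ 𝟙{max_j (zᵢⱼ − zᵢ_{yᵢ}) > 0}` is lower bounded by
`(1/n) ∑ᵢ (1/μ) log(∑_j exp(μ φ(zᵢⱼ − zᵢ_{yᵢ}))) − (1/μ) log K`. -/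
theorem empirical_zero_one_loss_ge_logsumexp_lower_bound
    (K n : ℕ) (hK : 1 ≤ K) (hn : 1 ≤ n) (μ : ℝ) (hμ : 0 < μ)
    (φ : ℝ → ℝ) (hφ : ∀ x : ℝ, φ x ≤ if 0 < x then (1 : ℝ) else 0)
    (z : Fin n → Fin K → ℝ) (y : Fin n → Fin K) :
    (1 / (n : ℝ)) * ∑ i : Fin n,
        (if 0 < Finset.univ.sup' (Finset.univ_nonempty_iff.mpr ⟨⟨0, hK⟩⟩)
              (fun j => z i j - z i (y i))
          then (1 : ℝ) else 0) ≥
      (1 / (n : ℝ)) * ∑ i : Fin n,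
          (1 / μ) * Real.log (∑ j : Fin K, Real.exp (μ * φ (z i j - z i (y i)))) -
        (1 / μ) * Real.log K := by
  have : NeZero n := ⟨by omega⟩
  have : NeZero K := ⟨by omega⟩
  simpa only [Fintype.card_fin] using
    empirical_zero_one_loss_ge_logsumexp_lower_bound_general hμ.ne' hφ
      fun i j ↦ z i j - z i (y i)
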